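/- Let q be a prime power with q ≡ 3 (mod 4). Then for every natural number N there exists a squarefree polynomial d ∈ 𝔽_q[t] such that the quadratic twist d·y² = x³ − x has at least N separable ∞-integral points; that is, the set {(F, G) ∈ 𝔽_q[t] × 𝔽_q[t] : d·G² = F³ − F and F′ ≠ 0} has at least N elements. (One may take d = t^{q^n} − t with n having at least N odd divisors.) In particular, the number of separable ∞-integral points on quadratic twists of y² = x³ − x by squarefree polynomials cannot be bounded independently of the twisting polynomial. -/

import Mathlib

open Polynomial

/-!
Let `p ≡ 3 (mod 4)` be the characteristic, `m` odd and `Q = p ^ m`, so that `Q ≡ 3 (mod 4)`. The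
trace polynomial `T = X + X ^ Q + ⋯ + X ^ (Q ^ (k - 1))` satisfies `T ^ Q - T = X ^ (Q ^ k) - X`,
and multiplying by the square of `G = T ^ ((Q - 3) / 4)` turns the left-hand side into `F ^ 3 - F`
with `F = T ^ ((Q - 1) / 2)`. So each odd divisor `m` of `n` yields a point on the twist by
`X ^ (p ^ n) - X`, and `n = 3 ^ N` has enough of them. Since `T` starts with `X`, the lowest term
of `F` is `X ^ ((Q - 1) / 2)`: it separates the points for different `m`, and its exponent is
nonzero in the base ring, because twice it is `-1` there; hence `F` is separable.
-/

theorem pow_mod_four_eq_three_iff {a n : ℕ} : a ^ n % 4 = 3 ↔ a % 4 = 3 ∧ Odd n := by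
  have h_lt : a % 4 < 4 := Nat.mod_lt _ (by norm_num)
  rw [Nat.pow_mod]
  obtain ⟨j, rfl | rfl⟩ := n.even_or_odd'
  · rw [pow_mul, Nat.pow_mod]
    interval_cases a % 4 <;> rcases j with _ | j <;> simp
  · rw [pow_succ, pow_mul, Nat.mul_mod, Nat.pow_mod]
    interval_cases a % 4 <;> rcases j with _ | j <;> simp

theorem ringChar_mod_four_eq_three_of_card {K : Type*} [Field K] [Fintype K]
    (hK : Fintype.card K % 4 = 3) : ringChar K % 4 = 3 := by
  obtain ⟨r, -, hcard⟩ := FiniteField.card K (ringChar K)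
  rw [hcard, pow_mod_four_eq_three_iff] at hK
  exact hK.1

section LowestTerm

variable {R : Type*} [CommSemiring R] {f : R[X]}

theorem coeff_pow_self_of_coeff_zero_eq_zero (h₀ : f.coeff 0 = 0) (n : ℕ) :
    (f ^ n).coeff n = f.coeff 1 ^ n := by
  obtain ⟨u, rfl⟩ := X_dvd_iff.2 h₀
  have h := coeff_X_pow_mul (u ^ n) n 0
  rw [zero_add] at h
  rw [mul_pow, h, coeff_zero_eq_eval_zero, eval_pow, ← coeff_zero_eq_eval_zero, coeff_X_mul]

theorem natTrailingDegree_pow_of_coeff_zero_eq_zero (h₀ : f.coeff 0 = 0) {n : ℕ}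
    (h₁ : f.coeff 1 ^ n ≠ 0) : (f ^ n).natTrailingDegree = n := by
  rw [← coeff_pow_self_of_coeff_zero_eq_zero h₀] at h₁
  have hf : f ^ n ≠ 0 := fun h => h₁ (by rw [h, coeff_zero])
  have hdvd : X ^ n ∣ f ^ n := pow_dvd_pow_of_dvd (X_dvd_iff.2 h₀) n
  exact le_antisymm (natTrailingDegree_le_of_ne_zero h₁)
    (le_natTrailingDegree hf (X_pow_dvd_iff.1 hdvd))

theorem derivative_pow_ne_zero_of_coeff_zero_eq_zero (h₀ : f.coeff 0 = 0) {n : ℕ}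
    (h₁ : f.coeff 1 ^ n * n ≠ 0) : derivative (f ^ n) ≠ 0 := by
  intro h
  rcases n with _ | n
  · simp at h₁
  · have hcoeff := coeff_derivative (f ^ (n + 1)) n
    rw [h, coeff_zero, coeff_pow_self_of_coeff_zero_eq_zero h₀] at hcoeff
    exact h₁ (by exact_mod_cast hcoeff.symm)

end LowestTerm

/-- The polynomial `X + X ^ Q + ⋯ + X ^ (Q ^ (k - 1))`, which for a prime power `Q` induces the
trace map of the extension of degree `k` of the field with `Q` elements. -/
noncomputable def tracePoly (R : Type*) [Semiring R] (Q k : ℕ) : R[X] :=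
  ∑ i ∈ Finset.range k, X ^ Q ^ i

/-- The point `(T ^ ((Q - 1) / 2), T ^ ((Q - 3) / 4))` on the twist of `y² = x³ - x` by
`X ^ (Q ^ k) - X`, where `T = tracePoly R Q k`. The divisions are exact when `Q ≡ 3 (mod 4)`. -/
noncomputable def tracePoint (R : Type*) [Semiring R] (Q k : ℕ) : R[X] × R[X] :=
  (tracePoly R Q k ^ ((Q - 1) / 2), tracePoly R Q k ^ ((Q - 3) / 4))

section Coefficients

variable (R : Type*) [Semiring R] {Q k : ℕ}

theorem coeff_zero_tracePoly (hQ : Q ≠ 0) : (tracePoly R Q k).coeff 0 = 0 := by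
  rw [tracePoly, finsetSum_coeff]
  exact Finset.sum_eq_zero fun i _ => by
    rw [coeff_X_pow, if_neg (pow_ne_zero i hQ).symm]

theorem coeff_one_tracePoly (hQ : Q ≠ 1) (hk : k ≠ 0) : (tracePoly R Q k).coeff 1 = 1 := by
  have h_pow (i : ℕ) : 1 = Q ^ i ↔ i = 0 := by
    rw [eq_comm, Nat.pow_eq_one, or_iff_right hQ]
  simp [tracePoly, coeff_X_pow, h_pow, hk, Nat.pos_iff_ne_zero]

end Coefficients

theorem mul_sq_pow_eq_cube_sub_self {R : Type*} [CommRing R] {Q : ℕ} (hQ : Q % 4 = 3) (x : R) :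
    (x ^ Q - x) * (x ^ ((Q - 3) / 4)) ^ 2 = (x ^ ((Q - 1) / 2)) ^ 3 - x ^ ((Q - 1) / 2) := by
  obtain ⟨m, rfl⟩ : ∃ m, Q = 4 * m + 3 := ⟨Q / 4, by omega⟩
  rw [show (4 * m + 3 - 3) / 4 = m by omega, show (4 * m + 3 - 1) / 2 = 2 * m + 1 by omega]
  ring

section PointsOnTwist

variable {R : Type*} [CommRing R]

theorem tracePoly_pow_sub_self (p : ℕ) [Fact p.Prime] [CharP R p] (e k : ℕ) :
    tracePoly R (p ^ e) k ^ p ^ e - tracePoly R (p ^ e) k = X ^ (p ^ e) ^ k - X := by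
  have h_frob (i : ℕ) : ((X : R[X]) ^ (p ^ e) ^ i) ^ p ^ e = X ^ (p ^ e) ^ (i + 1) := by
    rw [← pow_mul, ← pow_succ]
  rw [tracePoly, sum_pow_char_pow, ← Finset.sum_sub_distrib]
  simp only [h_frob]
  rw [Finset.sum_range_sub (fun i => (X : R[X]) ^ (p ^ e) ^ i), pow_zero, pow_one]

theorem tracePoint_mem_twist (p : ℕ) [Fact p.Prime] [CharP R p] {e : ℕ} (he : p ^ e % 4 = 3)
    (k : ℕ) :
    (X ^ (p ^ e) ^ k - X) * (tracePoint R (p ^ e) k).2 ^ 2 =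
      (tracePoint R (p ^ e) k).1 ^ 3 - (tracePoint R (p ^ e) k).1 := by
  rw [← tracePoly_pow_sub_self]
  exact mul_sq_pow_eq_cube_sub_self he _

variable [Nontrivial R] {Q k : ℕ}

theorem natTrailingDegree_tracePoint_fst (hQ : 1 < Q) (hk : k ≠ 0) :
    (tracePoint R Q k).1.natTrailingDegree = (Q - 1) / 2 :=
  natTrailingDegree_pow_of_coeff_zero_eq_zero (coeff_zero_tracePoly R (by omega))
    (by simp [coeff_one_tracePoly R hQ.ne' hk])

theorem derivative_tracePoint_fst_ne_zero (hQ : Odd Q) (hQR : (Q : R) = 0) (hk : k ≠ 0) :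
    derivative (tracePoint R Q k).1 ≠ 0 := by
  have hQ_ne_one : Q ≠ 1 := fun h => by simp [h] at hQR
  have h_exp : (((Q - 1) / 2 : ℕ) : R) ≠ 0 := by
    obtain ⟨m, rfl⟩ := hQ
    intro h
    rw [show (2 * m + 1 - 1) / 2 = m by omega] at h
    simp [h] at hQR
  exact derivative_pow_ne_zero_of_coeff_zero_eq_zero (coeff_zero_tracePoly R hQ.pos.ne')
    (by simpa [coeff_one_tracePoly R hQ_ne_one hk] using h_exp)

end PointsOnTwist

theorem stmt18_general (R : Type*) [CommRing R] (p : ℕ) [Fact p.Prime] [CharP R p]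
    (hp : p % 4 = 3) (N : ℕ) :
    ∃ d : R[X], Squarefree d ∧
      ∃ P : Fin N → R[X] × R[X], Function.Injective P ∧
        ∀ i, d * (P i).2 ^ 2 = (P i).1 ^ 3 - (P i).1 ∧ derivative (P i).1 ≠ 0 := by
  have : Nontrivial R := CharP.nontrivial_of_char_ne_one (Fact.out : p.Prime).ne_one
  let Q (i : ℕ) : ℕ := p ^ 3 ^ i
  have hQ_mod (i : ℕ) : Q i % 4 = 3 :=
    pow_mod_four_eq_three_iff.2 ⟨hp, (by decide : Odd 3).pow⟩
  have hQ_one_lt (i : ℕ) : 1 < Q i := by have := hQ_mod i; omega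
  have hQ_odd (i : ℕ) : Odd (Q i) := Nat.odd_iff.2 (by have := hQ_mod i; omega)
  have hQ_inj : Function.Injective Q :=
    (Nat.pow_right_injective (Fact.out : p.Prime).two_le).comp (Nat.pow_right_injective (by decide))
  have hQ_pow (i : Fin N) : Q i ^ 3 ^ (N - i) = Q N := by
    rw [← pow_mul, ← pow_add, Nat.add_sub_cancel' i.2.le]
  refine ⟨X ^ Q N - X, (galois_poly_separable p _ (dvd_pow_self p (by positivity))).squarefree,
    fun i => tracePoint R (Q i) (3 ^ (N - i)), fun i j hij => ?_, fun i => ⟨?_, ?_⟩⟩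
  · have h := congrArg (fun P => P.1.natTrailingDegree) hij
    simp only [natTrailingDegree_tracePoint_fst (hQ_one_lt _) (pow_ne_zero _ three_ne_zero)] at h
    have hi := hQ_mod i
    have hj := hQ_mod j
    exact Fin.ext (hQ_inj (by omega))
  · rw [← hQ_pow i]
    exact tracePoint_mem_twist p (hQ_mod i) _
  · exact derivative_tracePoint_fst_ne_zero (hQ_odd i) (by simp [Q]) (pow_ne_zero _ three_ne_zero)

theorem stmt18 (Fq : Type*) [Field Fq] [Fintype Fq]
    (hq : Fintype.card Fq % 4 = 3) (N : ℕ) :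
    ∃ d : Polynomial Fq, Squarefree d ∧
      ∃ P : Fin N → Polynomial Fq × Polynomial Fq, Function.Injective P ∧
        ∀ i, d * (P i).2 ^ 2 = (P i).1 ^ 3 - (P i).1 ∧ derivative (P i).1 ≠ 0 := by
  have : Fact (ringChar Fq).Prime := ⟨CharP.char_is_prime Fq _⟩
  exact stmt18_general Fq (ringChar Fq) (ringChar_mod_four_eq_three_of_card hq) N
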